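/- Let M ∈ ℝ^{p×p} be symmetric positive semidefinite with eigenvalues λ_1 ≥ ... ≥ λ_p ≥ 0 satisfying λ_j − λ_{j+1} ≥ Δ > 0 for j = 1, ..., d, orthonormal eigenvectors v_1, ..., v_p with ‖v_j‖₁ ≤ τ for j ≤ d, and set M_k = Σ_{i=k}^{p} λ_i v_i v_iᵀ. Let M̂ be symmetric positive semidefinite with ‖M̂ − M‖_max ≤ ε where ετ² ≤ 1, fix k ≤ d, fix C > 0, and suppose the PMD vectors v̂_1, ..., v̂_{k−1} computed from M̂ with ℓ1-bound τ satisfy sin²Θ(v̂_j, v_j) ≤ Cετ² and ‖v̂_j − v_j‖₂² ≤ Cετ² for all j < k. Then there exists a constant C′ > 0 depending only on C, k, and λ_1 (not on n, p, ε, or τ) such that for every w ∈ ℝ^p with ‖w‖₂ = 1 and ‖w‖₁ ≤ τ, writing α = sin²Θ(w, v_k): wᵀ M̂_k w ≤ λ_k − Δα + C′√(ετ²α) + C′ετ², where M̂_k = Π_{j<k}(I_p − v̂_j v̂_jᵀ)ᵀ M̂ Π_{j<k}(I_p − v̂_j v̂_jᵀ) is the k-th deflated matrix. -/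

import Mathlib

/-!
Write `δ = ε τ²`, `m = k - 1` and `s = √(C δ)`. The quadratic form of the deflated matrix at `w` is
that of `M̂` at `u = P₀ ⋯ P_{m-1} w`, where `P_j = I - v̂_j v̂_jᵀ`. Unfolding the product gives
`u = w - ∑_{j<m} c_j v̂_j` with `|c_j| ≤ 1` and `|c_j - w ⬝ v_j| ≤ m s` (`deflate_unroll`): the
estimate holds because `v̂_i ⬝ v_j = (v̂_i - v_i) ⬝ v_j` is at most `s` in absolute value for `i ≠ j`.

Hence `‖u‖₁ ≤ (m + 1) τ`, and replacing `M̂` by `M` costs at most `(m + 1)² δ`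
(`abs_quad_le_of_entry_le`).

In the eigenbasis of `M`, with `D = ∑_j c_j (v̂_j - v_j)`, the coordinates of `u` of index `< m` are
at most `2 m s`, while the others are those of `w - D`. The part of `w` of index `≥ m` contributes at
most `λ_k - Δ α` by the eigengap, and the cross terms at most `2 λ₁ ‖D‖ + λ₁ ‖D‖²`
(`spectral_bound`). Since `|w ⬝ v_j| ≤ √α` for `j < m`, one has `|c_j| ≤ √α + m s`, so
`‖D‖ ≤ m (√α + m s) s`, which is of order `√(δ α) + δ`.
-/

open Matrix BigOperators

noncomputable def l2norm {n : Type*} [Fintype n] (v : n → ℝ) : ℝ :=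
  Real.sqrt (∑ i, v i ^ 2)

def l1norm {n : Type*} [Fintype n] (v : n → ℝ) : ℝ := ∑ i, |v i|

noncomputable def maxNorm {m n : Type*} [Fintype m] [Fintype n] (A : Matrix m n ℝ) : ℝ :=
  ⨆ i, ⨆ j, |A i j|

noncomputable def deflate {p : ℕ} (Mh : Matrix (Fin p) (Fin p) ℝ)
    (vh : ℕ → (Fin p → ℝ)) : ℕ → Matrix (Fin p) (Fin p) ℝ
  | 0 => Mh
  | k + 1 => (1 - Matrix.vecMulVec (vh k) (vh k)) * deflate Mh vh k *
      (1 - Matrix.vecMulVec (vh k) (vh k))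

def IsPMD {p : ℕ} (Mh : Matrix (Fin p) (Fin p) ℝ) (τ : ℝ) (d : ℕ)
    (vh : ℕ → (Fin p → ℝ)) : Prop :=
  ∀ k < d, l1norm (vh k) ≤ τ ∧ l2norm (vh k) ≤ 1 ∧
    ∀ w : Fin p → ℝ, l1norm w ≤ τ → l2norm w ≤ 1 →
      dotProduct w ((deflate Mh vh k).mulVec w) ≤
        dotProduct (vh k) ((deflate Mh vh k).mulVec (vh k))

open Finset

/-! ### Norm inequalities -/

section Norms

variable {n : Type*} [Fintype n]

lemma l2norm_eq_norm (a : n → ℝ) : l2norm a = ‖WithLp.toLp 2 a‖ := by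
  simp [l2norm, EuclideanSpace.norm_eq]

lemma l2norm_nonneg (a : n → ℝ) : 0 ≤ l2norm a := Real.sqrt_nonneg _

lemma l2norm_sq (a : n → ℝ) : l2norm a ^ 2 = a ⬝ᵥ a := by
  rw [l2norm, Real.sq_sqrt (Finset.sum_nonneg fun i _ => sq_nonneg _)]
  simp [dotProduct, sq]

lemma abs_dot_le (a b : n → ℝ) : |a ⬝ᵥ b| ≤ l2norm a * l2norm b := by
  apply abs_le_of_sq_le_sq _ (mul_nonneg (l2norm_nonneg a) (l2norm_nonneg b))
  rw [mul_pow, l2norm_sq, l2norm_sq]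
  simpa [dotProduct, sq] using Finset.sum_mul_sq_le_sq_mul_sq Finset.univ a b

lemma l2norm_sum_smul_le {ι : Type*} (S : Finset ι) (c : ι → ℝ) (g : ι → n → ℝ) :
    l2norm (∑ j ∈ S, c j • g j) ≤ ∑ j ∈ S, |c j| * l2norm (g j) := by
  simp only [l2norm_eq_norm, WithLp.toLp_sum, WithLp.toLp_smul]
  refine (norm_sum_le _ _).trans (le_of_eq ?_)
  simp [norm_smul]

lemma l1norm_sub_le (a b : n → ℝ) : l1norm (a - b) ≤ l1norm a + l1norm b := by
  simp only [l1norm, ← Finset.sum_add_distrib]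
  exact Finset.sum_le_sum fun i _ => abs_sub _ _

lemma l1norm_sum_smul_le {ι : Type*} (S : Finset ι) (c : ι → ℝ) (g : ι → n → ℝ) :
    l1norm (∑ j ∈ S, c j • g j) ≤ ∑ j ∈ S, |c j| * l1norm (g j) := by
  simp only [l1norm, Finset.mul_sum]
  rw [Finset.sum_comm]
  refine Finset.sum_le_sum fun i _ => ?_
  simpa [abs_mul] using Finset.abs_sum_le_sum_abs (fun j => c j * g j i) S

lemma entry_le_maxNorm (A : Matrix n n ℝ) (i j : n) : |A i j| ≤ maxNorm A :=
  (le_ciSup (f := fun j => |A i j|) (Set.finite_range _).bddAbove j).trans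
    (le_ciSup (f := fun i => ⨆ j, |A i j|) (Set.finite_range _).bddAbove i)

lemma abs_quad_le_of_entry_le (A : Matrix n n ℝ) {ε : ℝ} (h : ∀ i j, |A i j| ≤ ε) (u : n → ℝ) :
    |u ⬝ᵥ A.mulVec u| ≤ ε * l1norm u ^ 2 := by
  have hR : ε * l1norm u ^ 2 = ∑ i, ∑ j, |u i| * (ε * |u j|) := by
    rw [l1norm, sq, Finset.sum_mul_sum]
    simp only [Finset.mul_sum]
    exact Finset.sum_congr rfl fun i _ => Finset.sum_congr rfl fun j _ => by ring
  rw [hR]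
  simp only [dotProduct, mulVec, Finset.mul_sum]
  refine (Finset.abs_sum_le_sum_abs _ _).trans (Finset.sum_le_sum fun i _ => ?_)
  refine (Finset.abs_sum_le_sum_abs _ _).trans (Finset.sum_le_sum fun j _ => ?_)
  rw [abs_mul, abs_mul]
  gcongr
  exact h i j

end Norms

/-! ### Unfolding the deflation -/

section Deflation

variable {p : ℕ}

lemma deflator_mulVec (a x : Fin p → ℝ) :
    (1 - vecMulVec a a).mulVec x = x - (a ⬝ᵥ x) • a := by
  rw [sub_mulVec, one_mulVec, vecMulVec_mulVec]
  ext i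
  simp

/-- For `‖a‖₂ ≤ 1` the map `I - a aᵀ` does not increase the Euclidean norm. -/
lemma l2norm_deflator_le (a x : Fin p → ℝ) (ha : l2norm a ≤ 1) (hx : l2norm x ≤ 1) :
    l2norm (x - (a ⬝ᵥ x) • a) ≤ 1 := by
  have h1 : l2norm (x - (a ⬝ᵥ x) • a) ^ 2 = l2norm x ^ 2 - (a ⬝ᵥ x) ^ 2 * (2 - l2norm a ^ 2) := by
    simp only [l2norm_sq, sub_dotProduct, dotProduct_sub, smul_dotProduct, dotProduct_smul,
      smul_eq_mul, dotProduct_comm x a]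
    ring
  have ha2 : l2norm a ^ 2 ≤ 1 := pow_le_one₀ (l2norm_nonneg a) ha
  have hx2 : l2norm x ^ 2 ≤ 1 := pow_le_one₀ (l2norm_nonneg x) hx
  have h2 : 0 ≤ (a ⬝ᵥ x) ^ 2 * (2 - l2norm a ^ 2) := mul_nonneg (sq_nonneg _) (by linarith)
  nlinarith [l2norm_nonneg (x - (a ⬝ᵥ x) • a)]

lemma deflate_succ_quad (Mh : Matrix (Fin p) (Fin p) ℝ) (vh : ℕ → Fin p → ℝ) (m : ℕ)
    (x : Fin p → ℝ) :
    x ⬝ᵥ (deflate Mh vh (m + 1)).mulVec x =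
      (x - (vh m ⬝ᵥ x) • vh m) ⬝ᵥ (deflate Mh vh m).mulVec (x - (vh m ⬝ᵥ x) • vh m) := by
  have ht : (1 - vecMulVec (vh m) (vh m))ᵀ = 1 - vecMulVec (vh m) (vh m) := by
    rw [transpose_sub, transpose_one, transpose_vecMulVec]
  rw [deflate, ← mulVec_mulVec, ← mulVec_mulVec, dotProduct_mulVec, ← mulVec_transpose, ht,
    deflator_mulVec]

/-- The quadratic form of the `m`-th deflated matrix at `x` is that of `Mh` at
`x - ∑ c_j v̂_j`, where `c_j` differs from the coordinate `x ⬝ f_j` by at most `m s`. The induction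
peels off the deflator that acts first on `x`, which is the one of the largest index. -/
lemma deflate_unroll (Mh : Matrix (Fin p) (Fin p) ℝ) (vh f : ℕ → Fin p → ℝ) (s : ℝ) (m : ℕ)
    (hvh : ∀ j < m, l2norm (vh j) ≤ 1) (hf : ∀ j < m, l2norm (f j) ≤ 1)
    (hd : ∀ j < m, l2norm (vh j - f j) ≤ s)
    (ho : ∀ i < m, ∀ j < m, i ≠ j → f i ⬝ᵥ f j = 0)
    (x : Fin p → ℝ) (hx : l2norm x ≤ 1) :
    ∃ c : ℕ → ℝ, (∀ j < m, |c j| ≤ 1) ∧ (∀ j < m, |c j - x ⬝ᵥ f j| ≤ m * s) ∧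
      x ⬝ᵥ (deflate Mh vh m).mulVec x =
        (x - ∑ j ∈ range m, c j • vh j) ⬝ᵥ Mh.mulVec (x - ∑ j ∈ range m, c j • vh j) := by
  induction m generalizing x with
  | zero => exact ⟨0, by simp, by simp, by simp [deflate]⟩
  | succ m ih =>
    have hm := Nat.lt_succ_self m
    have hs : 0 ≤ s := (l2norm_nonneg _).trans (hd m hm)
    obtain ⟨c, hc1, hc2, hc3⟩ := ih (fun j hj => hvh j (by omega)) (fun j hj => hf j (by omega))
      (fun j hj => hd j (by omega)) (fun i hi j hj => ho i (by omega) j (by omega))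
      (x - (vh m ⬝ᵥ x) • vh m) (l2norm_deflator_le _ _ (hvh m hm) hx)
    have hcm : |vh m ⬝ᵥ x| ≤ 1 := (abs_dot_le _ _).trans
      (mul_le_one₀ (hvh m hm) (l2norm_nonneg _) hx)
    refine ⟨Function.update c m (vh m ⬝ᵥ x), ?_, ?_, ?_⟩
    · intro j hj
      rcases eq_or_ne j m with rfl | hne
      · simpa using hcm
      · rw [Function.update_of_ne hne]
        exact hc1 j (by omega)
    · intro j hj
      rcases eq_or_ne j m with rfl | hne
      · rw [Function.update_self, dotProduct_comm x, ← sub_dotProduct]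
        refine (abs_dot_le _ _).trans ?_
        push_cast
        nlinarith [hd j hm, l2norm_nonneg x, l2norm_nonneg (vh j - f j),
          mul_nonneg (Nat.cast_nonneg (α := ℝ) j) hs]
      · rw [Function.update_of_ne hne]
        have h1 := hc2 j (by omega)
        have h2 : |vh m ⬝ᵥ f j| ≤ s := by
          have h0 : vh m ⬝ᵥ f j = (vh m - f m) ⬝ᵥ f j := by
            rw [sub_dotProduct, ho m hm j hj hne.symm, sub_zero]
          rw [h0]
          refine (abs_dot_le _ _).trans ?_
          exact (mul_le_of_le_one_right (l2norm_nonneg _) (hf j hj)).trans (hd m hm)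
        have h3 : |(vh m ⬝ᵥ x) * (vh m ⬝ᵥ f j)| ≤ s := by
          rw [abs_mul]
          exact (mul_le_of_le_one_left (abs_nonneg _) hcm).trans h2
        have h4 : c j - x ⬝ᵥ f j = (c j - (x - (vh m ⬝ᵥ x) • vh m) ⬝ᵥ f j)
            - (vh m ⬝ᵥ x) * (vh m ⬝ᵥ f j) := by
          rw [sub_dotProduct, smul_dotProduct, smul_eq_mul]
          ring
        rw [h4]
        refine (abs_sub _ _).trans ?_
        push_cast
        linarith
    · have h5 : x - ∑ j ∈ range (m + 1), Function.update c m (vh m ⬝ᵥ x) j • vh j =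
          (x - (vh m ⬝ᵥ x) • vh m) - ∑ j ∈ range m, c j • vh j := by
        rw [sum_range_succ, Function.update_self, sum_congr rfl (g := fun j => c j • vh j)]
        · abel
        · intro j hj
          rw [Function.update_of_ne (mem_range.mp hj).ne]
      rw [h5, deflate_succ_quad, hc3]

end Deflation

/-! ### Estimates in the eigenbasis -/

section Spectral

variable {p : ℕ}

/-- Parseval's identity for a family of `p` orthonormal vectors of `ℝ^p`. -/
lemma dot_eq_sum_coords (v : Fin p → Fin p → ℝ)
    (hv : ∀ i j, v i ⬝ᵥ v j = if i = j then (1 : ℝ) else 0) (x y : Fin p → ℝ) :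
    x ⬝ᵥ y = ∑ i, (x ⬝ᵥ v i) * (y ⬝ᵥ v i) := by
  have h1 : (of v) * (of v)ᵀ = 1 := by
    ext i j
    rw [mul_apply, one_apply, ← hv i j]
    rfl
  have h2 : (of v)ᵀ * (of v) = 1 := mul_eq_one_comm.mp h1
  have h3 : ∀ z : Fin p → ℝ, (of v).mulVec z = fun i => z ⬝ᵥ v i := fun z => by
    ext i
    rw [dotProduct_comm]
    rfl
  have h4 : (of v).mulVec x ⬝ᵥ (of v).mulVec y = x ⬝ᵥ y := by
    rw [dotProduct_mulVec, ← mulVec_transpose, mulVec_mulVec, h2, one_mulVec]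
  rw [← h4, h3, h3]
  rfl

lemma quad_eq_sum_coords (M : Matrix (Fin p) (Fin p) ℝ) (hM : M.PosSemidef)
    (v : Fin p → Fin p → ℝ) (lam : Fin p → ℝ)
    (hv : ∀ i j, v i ⬝ᵥ v j = if i = j then (1 : ℝ) else 0)
    (he : ∀ i, M.mulVec (v i) = lam i • v i) (x : Fin p → ℝ) :
    x ⬝ᵥ M.mulVec x = ∑ i, lam i * (x ⬝ᵥ v i) ^ 2 := by
  have hT : Mᵀ = M := by simpa [IsHermitian] using hM.isHermitian
  rw [dot_eq_sum_coords v hv]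
  refine sum_congr rfl fun i _ => ?_
  have h : M.mulVec x ⬝ᵥ v i = lam i * (x ⬝ᵥ v i) := by
    rw [dotProduct_comm, dotProduct_mulVec, ← mulVec_transpose, hT, he, smul_dotProduct,
      smul_eq_mul, dotProduct_comm]
  rw [h]
  ring

/-- Perturbation bound in eigencoordinates: `W`, `D`, `U` are the coordinates of `w`, of the
perturbation and of the deflated vector. The index `m` carries the eigenvalue above the gap, and the
coordinates of `U` are at most `t` in absolute value below `m`, and those of `W - D` from `m` on. -/
lemma spectral_bound (m : Fin p) (lam W D U : Fin p → ℝ) (L Δ t R : ℝ) (hL : ∀ i, lam i ≤ L)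
    (h0 : ∀ i, 0 ≤ lam i) (hg0 : Δ ≤ lam m) (hgap : ∀ i, m < i → lam i ≤ lam m - Δ)
    (hlow : ∀ i, i < m → |U i| ≤ t) (hhigh : ∀ i, m ≤ i → U i = W i - D i)
    (hW : ∑ i, W i ^ 2 = 1) (hR : 0 ≤ R) (hD : ∑ i, D i ^ 2 ≤ R ^ 2) :
    ∑ i, lam i * U i ^ 2 ≤
      lam m - Δ * (1 - W m ^ 2) + L * (m * t ^ 2) + 2 * L * R + L * R ^ 2 := by
  have hL0 : 0 ≤ L := (h0 m).trans (hL m)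
  have hcs : ∑ i, |W i| * |D i| ≤ R := by
    refine (Real.sum_mul_le_sqrt_mul_sqrt _ _ _).trans ?_
    simp only [sq_abs]
    rw [hW, Real.sqrt_one, one_mul]
    exact Real.sqrt_le_iff.mpr ⟨hR, hD⟩
  have hterm : ∀ i, lam i * U i ^ 2 ≤ (lam m - Δ) * W i ^ 2 + (if i = m then Δ * W m ^ 2 else 0)
      + (if i < m then L * t ^ 2 else 0) + 2 * L * (|W i| * |D i|) + L * D i ^ 2 := by
    intro i
    have hWD : 0 ≤ 2 * L * (|W i| * |D i|) := by positivity
    have hDD : 0 ≤ L * D i ^ 2 := by positivity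
    rcases lt_or_ge i m with hi | hi
    · rw [if_neg hi.ne, if_pos hi]
      have h1 : U i ^ 2 ≤ t ^ 2 := sq_le_sq' (abs_le.mp (hlow i hi)).1 (abs_le.mp (hlow i hi)).2
      have h2 : lam i * U i ^ 2 ≤ L * t ^ 2 :=
        mul_le_mul (hL i) h1 (sq_nonneg _) hL0
      have h3 : 0 ≤ (lam m - Δ) * W i ^ 2 := mul_nonneg (by linarith) (sq_nonneg _)
      linarith
    · rw [if_neg hi.not_gt, hhigh i hi]
      have h1 : -(W i * D i) ≤ |W i| * |D i| := by
        rw [← abs_mul]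
        exact neg_le_abs _
      have h2 : lam i * (-(W i * D i)) ≤ L * (|W i| * |D i|) :=
        (mul_le_mul_of_nonneg_left h1 (h0 i)).trans
          (mul_le_mul_of_nonneg_right (hL i) (by positivity))
      have h3 : lam i * D i ^ 2 ≤ L * D i ^ 2 := mul_le_mul_of_nonneg_right (hL i) (sq_nonneg _)
      have h4 : lam i * W i ^ 2 ≤ (lam m - Δ) * W i ^ 2 + (if i = m then Δ * W m ^ 2 else 0) := by
        rcases eq_or_ne i m with rfl | hne
        · rw [if_pos rfl]
          linarith
        · rw [if_neg hne, add_zero]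
          exact mul_le_mul_of_nonneg_right (hgap i (lt_of_le_of_ne hi hne.symm)) (sq_nonneg _)
      nlinarith
  refine (sum_le_sum fun i _ => hterm i).trans ?_
  simp only [sum_add_distrib, ← mul_sum]
  have hcard : ∑ i : Fin p, (if i < m then L * t ^ 2 else 0) = m * (L * t ^ 2) := by
    rw [← sum_filter, sum_const, nsmul_eq_mul]
    congr 2
    exact (congrArg card (by ext; simp)).trans (Fin.card_Iio m)
  rw [hcard, hW, sum_ite_eq' univ m, if_pos (mem_univ m)]
  have h1 := mul_le_mul_of_nonneg_left hcs (by positivity : 0 ≤ 2 * L)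
  have h2 := mul_le_mul_of_nonneg_left hD hL0
  linarith

end Spectral

/-! ### The upper bound for the deflated quadratic form -/

/-- Lemma S6: upper bound `wᵀM̂_k w ≤ λ_k − Δα + C′√(ετ²α) + C′ετ²`
for the `k`-th deflated matrix, where `α = sin²Θ(w, v_k)`, assuming the first `k−1` PMD
vectors are already accurate; the constant `C′` depends only on `C`, `k` and `λ₁`. -/
theorem stmt_12 (C : ℝ) (hC : 0 < C) (k : ℕ) (hk1 : 1 ≤ k) (lam1 : ℝ) :
    ∃ C' : ℝ, 0 < C' ∧
      ∀ (p d : ℕ) (hkd : k ≤ d) (hdp : d < p)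
        (M Mh : Matrix (Fin p) (Fin p) ℝ),
        M.PosSemidef → Mh.PosSemidef →
        ∀ (v : Fin p → (Fin p → ℝ)) (lam : Fin p → ℝ),
          (∀ i j, dotProduct (v i) (v j) = if i = j then (1 : ℝ) else 0) →
          (∀ i, M.mulVec (v i) = lam i • v i) →
          Antitone lam → (∀ i, 0 ≤ lam i) →
          lam ⟨0, by omega⟩ = lam1 →
          ∀ Δ : ℝ, 0 < Δ →
          (∀ j : Fin d, Δ ≤ lam ⟨j, by omega⟩ - lam ⟨(j : ℕ) + 1, by omega⟩) →
          ∀ τ : ℝ, (∀ j : Fin d, l1norm (v ⟨j, by omega⟩) ≤ τ) →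
          ∀ ε : ℝ, 0 < ε → ε * τ ^ 2 ≤ 1 →
          maxNorm (Mh - M) ≤ ε →
          ∀ vh : ℕ → (Fin p → ℝ), IsPMD Mh τ (k - 1) vh →
          (∀ j : ℕ, ∀ hj : j < k - 1,
            1 - (dotProduct (vh j) (v ⟨j, by omega⟩)) ^ 2 / (l2norm (vh j)) ^ 2 ≤
                C * ε * τ ^ 2 ∧
              (l2norm (vh j - v ⟨j, by omega⟩)) ^ 2 ≤ C * ε * τ ^ 2) →
          ∀ w : Fin p → ℝ, l2norm w = 1 → l1norm w ≤ τ →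
          ∀ α : ℝ, α = 1 - (dotProduct w (v ⟨k - 1, by omega⟩)) ^ 2 →
            dotProduct w ((deflate Mh vh (k - 1)).mulVec w) ≤
              lam ⟨k - 1, by omega⟩ - Δ * α +
                C' * Real.sqrt (ε * τ ^ 2 * α) + C' * ε * τ ^ 2 := by
  obtain ⟨m, rfl⟩ : ∃ m, k = m + 1 := ⟨k - 1, by omega⟩
  simp only [Nat.add_sub_cancel]
  refine ⟨|lam1| * (2 * m * √C + 2 * m ^ 2 * C + 4 * m ^ 3 * C + m ^ 2 * C) + (m + 1) ^ 2,
    by positivity, ?_⟩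
  intro p d hkd hdp M Mh hM hMh v lam hv he hanti h0 hl1 Δ hΔ hgap τ hvτ ε hε hετ hmax vh hPMD
    hclose w hw2 hw1 α hα
  have hτ : 0 ≤ τ := (Finset.sum_nonneg fun i _ => abs_nonneg (w i)).trans hw1
  have hL0 : 0 ≤ lam1 := hl1 ▸ h0 _
  rw [abs_of_nonneg hL0]
  obtain ⟨δ, hδ⟩ : ∃ δ, δ = ε * τ ^ 2 := ⟨_, rfl⟩
  have hδ0 : 0 ≤ δ := hδ ▸ by positivity
  obtain ⟨s, hs⟩ : ∃ s, s = √C * √δ := ⟨_, rfl⟩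
  have hs0 : 0 ≤ s := hs ▸ by positivity
  have hs2 : s ^ 2 = C * δ := by rw [hs, mul_pow, Real.sq_sqrt hC.le, Real.sq_sqrt hδ0]
  -- The eigenvectors as a sequence indexed by `ℕ`; the values from index `p` on are irrelevant.
  obtain ⟨f, hf⟩ : ∃ f : ℕ → Fin p → ℝ, ∀ j (hj : j < p), f j = v ⟨j, hj⟩ :=
    ⟨fun j => if h : j < p then v ⟨j, h⟩ else 0, fun j hj => by simp [hj]⟩
  have hv1 : ∀ i, l2norm (v i) = 1 := fun i => by
    have h := l2norm_sq (v i)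
    rw [hv, if_pos rfl] at h
    exact (pow_eq_one_iff_of_nonneg (l2norm_nonneg (v i)) two_ne_zero).mp h
  have hvh2 : ∀ j < m, l2norm (vh j) ≤ 1 := fun j hj => (hPMD j hj).2.1
  have hd : ∀ j < m, l2norm (vh j - f j) ≤ s := fun j hj => by
    rw [hf j (by omega)]
    refine abs_le_of_sq_le_sq' ?_ hs0 |>.2
    rw [hs2, hδ, ← mul_assoc]
    exact (hclose j hj).2
  obtain ⟨c, hc1, hc2, hc3⟩ := deflate_unroll Mh vh f s m hvh2
    (fun j hj => by rw [hf j (by omega), hv1]) hd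
    (fun i hi j hj hij => by
      rw [hf i (by omega), hf j (by omega), hv, if_neg (by simpa using hij)]) w hw2.le
  rw [hc3]
  set u := w - ∑ j ∈ range m, c j • vh j with hu
  set D := ∑ j ∈ range m, c j • (vh j - f j) with hDdef
  set m' : Fin p := ⟨m, by omega⟩ with hm'
  have hul1 : l1norm u ≤ (m + 1) * τ := by
    refine (l1norm_sub_le _ _).trans ?_
    have h1 : l1norm (∑ j ∈ range m, c j • vh j) ≤ m * τ := by
      refine (l1norm_sum_smul_le _ _ _).trans ?_
      refine (sum_le_card_nsmul _ _ τ fun j hj => ?_).trans (by simp)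
      have hj' := mem_range.mp hj
      exact (mul_le_of_le_one_left (Finset.sum_nonneg fun i _ => abs_nonneg _)
        (hc1 j hj')).trans (hPMD j hj').1
    linarith
  have hpert : u ⬝ᵥ Mh.mulVec u ≤ u ⬝ᵥ M.mulVec u + (m + 1) ^ 2 * δ := by
    have h1 := abs_quad_le_of_entry_le (Mh - M)
      (fun i j => (entry_le_maxNorm _ i j).trans hmax) u
    rw [sub_mulVec, dotProduct_sub] at h1
    have h2 : ε * l1norm u ^ 2 ≤ ε * ((m + 1) * τ) ^ 2 := by
      have : 0 ≤ l1norm u := Finset.sum_nonneg fun i _ => abs_nonneg _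
      gcongr
    have h3 : ε * ((m + 1) * τ) ^ 2 = (m + 1) ^ 2 * δ := by rw [hδ]; ring
    linarith [le_abs_self (u ⬝ᵥ Mh.mulVec u - u ⬝ᵥ M.mulVec u)]
  have hW : ∑ i, (w ⬝ᵥ v i) ^ 2 = 1 := by
    have h := dot_eq_sum_coords v hv w w
    rw [← l2norm_sq, hw2] at h
    simp only [← sq] at h
    linarith
  have hα0 : 0 ≤ α := by
    have h := Finset.single_le_sum (f := fun i => (w ⬝ᵥ v i) ^ 2) (fun i _ => sq_nonneg _)
      (mem_univ m')
    rw [hW] at h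
    linarith
  have hWα : ∀ j < m, |w ⬝ᵥ f j| ≤ √α := fun j hj => by
    rw [hf j (by omega)]
    refine Real.abs_le_sqrt ?_
    have hne : (⟨j, by omega⟩ : Fin p) ≠ m' := by simp [hm', hj.ne]
    have h := Finset.sum_le_sum_of_subset_of_nonneg (f := fun i => (w ⬝ᵥ v i) ^ 2)
      (subset_univ {(⟨j, by omega⟩ : Fin p), m'}) (fun i _ _ => sq_nonneg _)
    rw [sum_pair hne, hW] at h
    linarith
  have hcα : ∀ j < m, |c j| ≤ √α + m * s := fun j hj => by
    have h1 := abs_add_le (c j - w ⬝ᵥ f j) (w ⬝ᵥ f j)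
    rw [sub_add_cancel] at h1
    linarith [hc2 j hj, hWα j hj]
  have hDle : ∀ B, (∀ j < m, |c j| ≤ B) → l2norm D ≤ m * (B * s) := fun B hB => by
    refine (l2norm_sum_smul_le _ _ _).trans ?_
    refine (sum_le_card_nsmul _ _ (B * s) fun j hj => ?_).trans (by simp)
    have hj' := mem_range.mp hj
    exact mul_le_mul (hB j hj') (hd j hj') (l2norm_nonneg _) ((abs_nonneg _).trans (hB j hj'))
  have hD1 := hDle _ hc1
  have hD2 := hDle _ hcα
  have huD : ∀ i, u ⬝ᵥ v i = w ⬝ᵥ v i - (∑ j ∈ range m, c j * (f j ⬝ᵥ v i)) - D ⬝ᵥ v i := by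
    intro i
    have h : u = w - ∑ j ∈ range m, c j • f j - D := by
      rw [hu, hDdef]
      simp only [smul_sub, sum_sub_distrib]
      abel
    rw [h, sub_dotProduct, sub_dotProduct, sum_dotProduct]
    simp only [smul_dotProduct, smul_eq_mul]
  have hfv : ∀ j < m, ∀ i : Fin p, f j ⬝ᵥ v i = if (i : ℕ) = j then 1 else 0 := by
    intro j hj i
    rw [hf j (by omega), hv]
    simp only [Fin.ext_iff, eq_comm]
  have hhigh : ∀ i, m' ≤ i → u ⬝ᵥ v i = w ⬝ᵥ v i - D ⬝ᵥ v i := by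
    intro i hi
    have hi' : m ≤ (i : ℕ) := hi
    rw [huD, sum_eq_zero, sub_zero]
    intro j hj
    have hj' := mem_range.mp hj
    rw [hfv j hj', if_neg (by omega), mul_zero]
  have hlow : ∀ i, i < m' → |u ⬝ᵥ v i| ≤ 2 * m * s := by
    intro i hi
    have hi' : (i : ℕ) < m := hi
    have h1 : ∑ j ∈ range m, c j * (f j ⬝ᵥ v i) = c i := by
      rw [sum_eq_single_of_mem (i : ℕ) (mem_range.mpr hi'), hfv _ hi', if_pos rfl, mul_one]
      intro j hj hne
      rw [hfv j (mem_range.mp hj), if_neg hne.symm, mul_zero]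
    have h2 : |D ⬝ᵥ v i| ≤ m * s := by
      refine (abs_dot_le _ _).trans ?_
      rw [hv1, mul_one]
      linarith
    have h3 := hc2 i hi'
    rw [hf i i.2, abs_sub_comm] at h3
    rw [huD, h1]
    refine (abs_sub _ _).trans ?_
    linarith
  have hgm : ∀ i, m' < i → lam i ≤ lam m' - Δ := by
    intro i hi
    have h1 := hgap ⟨m, by omega⟩
    have h2 : lam i ≤ lam ⟨m + 1, by omega⟩ := hanti (show m + 1 ≤ (i : ℕ) from hi)
    simp only at h1
    linarith
  have hg0 : Δ ≤ lam m' := by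
    have h1 := hgap ⟨m, by omega⟩
    have h2 := h0 ⟨m + 1, by omega⟩
    simp only at h1
    linarith
  have hDc : ∑ i, (D ⬝ᵥ v i) ^ 2 ≤ l2norm D ^ 2 := by
    rw [l2norm_sq, dot_eq_sum_coords v hv D D]
    simp only [← sq]
    exact le_rfl
  have hspec := spectral_bound m' lam (fun i => w ⬝ᵥ v i) (fun i => D ⬝ᵥ v i)
    (fun i => u ⬝ᵥ v i) lam1 Δ (2 * m * s) (l2norm D)
    (fun i => hl1 ▸ hanti (Nat.zero_le _)) h0 hg0 hgm hlow hhigh hW (l2norm_nonneg _) hDc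
  rw [← quad_eq_sum_coords M hM v lam hv he] at hspec
  rw [← hα] at hspec
  have hsα : √α * s = √C * √(δ * α) := by
    rw [hs, Real.sqrt_mul hδ0]
    ring
  have hDsq : l2norm D ^ 2 ≤ m ^ 2 * (C * δ) := by
    have := pow_le_pow_left₀ (l2norm_nonneg D) hD1 2
    rw [← hs2]
    linarith
  have hDlin : l2norm D ≤ m * √C * √(δ * α) + m ^ 2 * (C * δ) := by
    rw [← hs2]
    linear_combination hD2 + m * hsα
  have hLD := mul_le_mul_of_nonneg_left hDlin hL0
  have hLD2 := mul_le_mul_of_nonneg_left hDsq hL0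
  have ht : lam1 * (m * (2 * m * s) ^ 2) = lam1 * (4 * m ^ 3 * C) * δ := by
    linear_combination lam1 * 4 * m ^ 3 * hs2
  have hm'c : ((m' : ℕ) : ℝ) = m := rfl
  rw [hm'c, ht] at hspec
  rw [mul_assoc _ ε, ← hδ]
  -- The same `C'` multiplies `√(δ α)` and `δ`; the surplus in each of the two terms is nonnegative.
  have hq := Real.sqrt_nonneg (δ * α)
  have e1 : 0 ≤ lam1 * (2 * m ^ 2 * C + 4 * m ^ 3 * C + m ^ 2 * C) * √(δ * α) := by positivity
  have e2 : 0 ≤ ((m : ℝ) + 1) ^ 2 * √(δ * α) := by positivity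
  have e3 : 0 ≤ lam1 * (2 * m * √C) * δ := by positivity
  linarith
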